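/- Let L be a positive integer, and let P_s, P_n, P_i, N_d, λ be positive real numbers. Set ξ = N_d·P_s/(λ·(P_i + P_n)) and γ = L·λ·(P_n + P_i)/P_s. Then ∫₀^∞ Q(√(2·t·ξ)) · (L^L/(L−1)!) · t^{L−1} · e^{−L·t} dt = 1/2 − (1/2) · Σ_{i=0}^{L−1} C(2i, i) · (γ/(4·N_d))^i · (N_d/(N_d + γ))^{i + 1/2}, where C(2i, i) is the central binomial coefficient. -/

import Mathlib

/-- The Gaussian tail function `Q(x) = ∫_x^∞ (1/√(2π)) e^{−u²/2} du`. -/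
noncomputable def gaussQ (x : ℝ) : ℝ :=
  ∫ u in Set.Ioi x, (1 / Real.sqrt (2 * Real.pi)) * Real.exp (-u ^ 2 / 2)

open MeasureTheory

lemma gQ_integrable : Integrable (fun u : ℝ =>
    (1 / Real.sqrt (2 * Real.pi)) * Real.exp (-u ^ 2 / 2)) := by
  have h := (integrable_exp_neg_mul_sq (b := 1 / 2) (by norm_num)).const_mul
    (1 / Real.sqrt (2 * Real.pi))
  refine h.congr (Filter.Eventually.of_forall fun u => ?_)
  simp only
  congr 2
  ring

lemma gQ_zero : gaussQ 0 = 1 / 2 := by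
  unfold gaussQ
  rw [integral_const_mul]
  have h := integral_gaussian_Ioi (1 / 2)
  have e : (fun u : ℝ => Real.exp (-u ^ 2 / 2)) = fun u : ℝ => Real.exp (-(1 / 2) * u ^ 2) := by
    funext u
    congr 1
    ring
  rw [e, h]
  have : Real.pi / (1 / 2) = 2 * Real.pi := by ring
  rw [this]
  have : 0 < Real.sqrt (2 * Real.pi) := by positivity
  field_simp

lemma gQ_nonneg (x : ℝ) : 0 ≤ gaussQ x := by
  unfold gaussQ
  exact integral_nonneg fun u => by positivity

lemma gQ_eq (x : ℝ) : gaussQ x = 1 / 2 - ∫ u in (0 : ℝ)..x,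
    (1 / Real.sqrt (2 * Real.pi)) * Real.exp (-u ^ 2 / 2) := by
  have h := intervalIntegral.integral_interval_add_Ioi (a := 0) (b := x)
    gQ_integrable.integrableOn gQ_integrable.integrableOn
  have h0 := gQ_zero
  unfold gaussQ at h0 ⊢
  linarith

lemma gQ_le (x : ℝ) (hx : 0 ≤ x) : gaussQ x ≤ 1 / 2 := by
  rw [gQ_eq]
  have := intervalIntegral.integral_nonneg (f := fun u : ℝ =>
    (1 / Real.sqrt (2 * Real.pi)) * Real.exp (-u ^ 2 / 2)) (μ := volume) hx
    (fun u _ => by positivity)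
  linarith

lemma gQ_deriv (x : ℝ) : HasDerivAt gaussQ
    (-((1 / Real.sqrt (2 * Real.pi)) * Real.exp (-x ^ 2 / 2))) x := by
  have hc : Continuous (fun u : ℝ =>
    (1 / Real.sqrt (2 * Real.pi)) * Real.exp (-u ^ 2 / 2)) := by fun_prop
  have e : gaussQ = fun x => 1 / 2 - ∫ u in (0 : ℝ)..x,
    (1 / Real.sqrt (2 * Real.pi)) * Real.exp (-u ^ 2 / 2) := funext gQ_eq
  rw [e]
  exact (hc.integral_hasStrictDerivAt 0 x).hasDerivAt.const_sub _

/-- Gamma survival function. -/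
noncomputable def survS (a : ℝ) (n : ℕ) (t : ℝ) : ℝ :=
  ∑ i ∈ Finset.range (n + 1), a ^ i / (Nat.factorial i : ℝ) * (t ^ i * Real.exp (-a * t))

lemma survS_deriv (a : ℝ) (n : ℕ) (t : ℝ) : HasDerivAt (survS a n)
    (-(a ^ (n + 1) / (Nat.factorial n : ℝ) * t ^ n * Real.exp (-a * t))) t := by
  have he : HasDerivAt (fun t : ℝ => Real.exp (-a * t)) (Real.exp (-a * t) * (-a * 1)) t :=
    ((hasDerivAt_id t).const_mul (-a)).exp
  induction n with
  | zero =>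
    have e : survS a 0 = fun t => Real.exp (-a * t) := by
      funext t
      simp [survS]
    rw [e]
    convert he using 1
    simp
    ring
  | succ n ih =>
    have e : survS a (n + 1) = fun t => survS a n t +
        a ^ (n + 1) / (Nat.factorial (n + 1) : ℝ) * (t ^ (n + 1) * Real.exp (-a * t)) := by
      funext t
      simp only [survS]
      rw [Finset.sum_range_succ]
    rw [e]
    have h2 := ((hasDerivAt_pow (n + 1) t).mul he).const_mul
      (a ^ (n + 1) / (Nat.factorial (n + 1) : ℝ))
    refine HasDerivAt.congr_deriv (ih.add h2) ?_
    have : (Nat.factorial n : ℝ) ≠ 0 := by positivity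
    have : (n : ℝ) + 1 ≠ 0 := by positivity
    rw [Nat.factorial_succ, Nat.add_sub_cancel]
    push_cast
    field_simp
    ring

lemma survS_zero (a : ℝ) (n : ℕ) : survS a n 0 = 1 := by
  unfold survS
  rw [Finset.sum_range_succ']
  simp

lemma survS_tendsto (a : ℝ) (ha : 0 < a) (n : ℕ) :
    Filter.Tendsto (survS a n) Filter.atTop (nhds 0) := by
  unfold survS
  rw [show (0 : ℝ) = ∑ i ∈ Finset.range (n + 1), a ^ i / (Nat.factorial i : ℝ) * 0 by simp]
  refine tendsto_finsetSum _ fun i _ => Filter.Tendsto.const_mul _ ?_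
  simpa using tendsto_rpow_mul_exp_neg_mul_atTop_nhds_zero i a ha

lemma gamma_half (i : ℕ) : Real.Gamma ((i : ℝ) + 1 / 2) =
    Real.sqrt Real.pi * (Nat.choose (2 * i) i : ℝ) * (Nat.factorial i : ℝ) / 4 ^ i := by
  rw [← Nat.centralBinom_eq_two_mul_choose]
  induction i with
  | zero => simpa using Real.Gamma_one_half_eq
  | succ i ih =>
    have h1 : ((i + 1 : ℕ) : ℝ) + 1 / 2 = ((i : ℝ) + 1 / 2) + 1 := by
      push_cast
      ring
    rw [h1, Real.Gamma_add_one (by positivity), ih]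
    have h : ((i : ℝ) + 1) * ((i + 1).centralBinom : ℝ) =
        2 * (2 * (i : ℝ) + 1) * (i.centralBinom : ℝ) := by
      exact_mod_cast Nat.succ_mul_centralBinom_succ i
    rw [Nat.factorial_succ]
    push_cast
    rw [show √Real.pi * ((i + 1).centralBinom : ℝ) * (((i : ℝ) + 1) * (Nat.factorial i : ℝ)) =
      √Real.pi * (Nat.factorial i : ℝ) * (((i : ℝ) + 1) * ((i + 1).centralBinom : ℝ)) by ring, h]
    rw [pow_succ]
    field_simp
    ring

lemma gQ_sqrt_deriv (ξ t : ℝ) (hξ : 0 < ξ) (ht : 0 < t) :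
    HasDerivAt (fun t => gaussQ (Real.sqrt (2 * t * ξ)))
      (-(1 / 2 * Real.sqrt (ξ / Real.pi) * (t ^ (-(1 / 2) : ℝ) * Real.exp (-ξ * t)))) t := by
  have hpos : 0 < 2 * t * ξ := by positivity
  have h1 : HasDerivAt (fun t : ℝ => 2 * t * ξ) (2 * ξ) t := by
    simpa using ((hasDerivAt_id t).const_mul 2).mul_const ξ
  have h := (gQ_deriv (Real.sqrt (2 * t * ξ))).comp t (h1.sqrt hpos.ne')
  refine HasDerivAt.congr_deriv h ?_
  rw [Real.sq_sqrt hpos.le, Real.rpow_neg ht.le, ← Real.sqrt_eq_rpow]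
  rw [show -(2 * t * ξ) / 2 = -ξ * t by ring]
  rw [Real.sqrt_div hξ.le, Real.sqrt_mul (by positivity) ξ, Real.sqrt_mul (by positivity) t,
    Real.sqrt_mul (by positivity) Real.pi]
  have a1 : 0 < √t := by positivity
  have a2 : 0 < √ξ := by positivity
  have a3 : 0 < √(2 : ℝ) := by positivity
  have a4 : 0 < √Real.pi := by positivity
  have b2 : √ξ ^ 2 = ξ := Real.sq_sqrt hξ.le
  have b3 : √(2 : ℝ) ^ 2 = 2 := Real.sq_sqrt (by norm_num)
  field_simp
  rw [b2, b3]
  ring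

lemma main_aux (a ξ : ℝ) (ha : 0 < a) (hξ : 0 < ξ) (n : ℕ) :
    ∫ t in Set.Ioi (0 : ℝ), gaussQ (Real.sqrt (2 * t * ξ)) *
      (a ^ (n + 1) / (Nat.factorial n : ℝ)) * t ^ n * Real.exp (-a * t)
    = 1 / 2 - ∑ i ∈ Finset.range (n + 1), 1 / 2 * Real.sqrt (ξ / Real.pi) *
        (a ^ i / (Nat.factorial i : ℝ)) *
        ((1 / (a + ξ)) ^ ((i : ℝ) + 1 / 2) * Real.Gamma ((i : ℝ) + 1 / 2)) := by
  set D : ℝ → ℝ := fun t => gaussQ (Real.sqrt (2 * t * ξ)) *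
      (a ^ (n + 1) / (Nat.factorial n : ℝ)) * t ^ n * Real.exp (-a * t) with hD
  set T : ℕ → ℝ → ℝ := fun i t => 1 / 2 * Real.sqrt (ξ / Real.pi) *
        (a ^ i / (Nat.factorial i : ℝ)) *
        (t ^ ((i : ℝ) + 1 / 2 - 1) * Real.exp (-((a + ξ) * t))) with hT
  set G : ℝ → ℝ := fun t => -(gaussQ (Real.sqrt (2 * t * ξ)) * survS a n t) with hG
  have hG0 : G 0 = -(1 / 2) := by simp [hG, survS_zero, gQ_zero]
  have hcont : Continuous G := by
    have c1 : Continuous gaussQ :=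
      continuous_iff_continuousAt.2 fun x => (gQ_deriv x).continuousAt
    have c2 : Continuous (survS a n) :=
      continuous_iff_continuousAt.2 fun x => (survS_deriv a n x).continuousAt
    have c3 : Continuous fun t : ℝ => Real.sqrt (2 * t * ξ) := by fun_prop
    exact ((c1.comp c3).mul c2).neg
  have hder : ∀ t ∈ Set.Ioi (0 : ℝ),
      HasDerivAt G (D t + ∑ i ∈ Finset.range (n + 1), T i t) t := by
    intro t ht
    have ht : 0 < t := ht
    have h := ((gQ_sqrt_deriv ξ t hξ ht).mul (survS_deriv a n t)).neg
    refine HasDerivAt.congr_deriv h ?_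
    have : ∑ i ∈ Finset.range (n + 1), T i t = 1 / 2 * Real.sqrt (ξ / Real.pi) *
        (t ^ (-(1 / 2) : ℝ) * Real.exp (-ξ * t)) * survS a n t := by
      rw [survS, Finset.mul_sum]
      refine Finset.sum_congr rfl fun i _ => ?_
      simp only [hT]
      rw [show (i : ℝ) + 1 / 2 - 1 = -(1 / 2) + (i : ℝ) by ring, Real.rpow_add ht,
        Real.rpow_natCast, show -((a + ξ) * t) = -ξ * t + -a * t by ring, Real.exp_add]
      ring
    rw [this, hD]
    ring
  have hnn : ∀ t ∈ Set.Ioi (0 : ℝ), 0 ≤ D t + ∑ i ∈ Finset.range (n + 1), T i t := by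
    intro t ht
    have ht : 0 < t := ht
    have := gQ_nonneg (Real.sqrt (2 * t * ξ))
    refine add_nonneg ?_ (Finset.sum_nonneg fun i _ => ?_)
    · simp only [hD]
      positivity
    · simp only [hT]
      positivity
  have hlim : Filter.Tendsto G Filter.atTop (nhds 0) := by
    have hS := survS_tendsto a ha n
    have := hS.zero_mul_isBoundedUnder_le (g := fun t => gaussQ (Real.sqrt (2 * t * ξ)))
      (Filter.isBoundedUnder_of ⟨1 / 2, fun t => by
        simp only [Function.comp, Real.norm_eq_abs, abs_of_nonneg (gQ_nonneg _)]
        exact gQ_le _ (Real.sqrt_nonneg _)⟩)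
    have := this.neg
    simpa [hG, mul_comm] using this
  have hint := integrableOn_Ioi_deriv_of_nonneg hcont.continuousWithinAt hder hnn hlim
  have hval := integral_Ioi_of_hasDerivAt_of_nonneg hcont.continuousWithinAt hder hnn hlim
  have hTint : ∀ i, IntegrableOn (T i) (Set.Ioi 0) := by
    intro i
    refine Integrable.const_mul ?_ _
    have := integrableOn_rpow_mul_exp_neg_mul_rpow (p := 1) (s := (i : ℝ) + 1 / 2 - 1)
      (b := a + ξ) (by have : (0 : ℝ) ≤ i := by positivity
                       linarith) one_pos (by positivity)
    simp only [Real.rpow_one, neg_mul] at this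
    exact this
  have hsum : IntegrableOn (fun t => ∑ i ∈ Finset.range (n + 1), T i t) (Set.Ioi 0) :=
    integrable_finsetSum _ fun i _ => hTint i
  have hs := integral_sub hint hsum
  rw [hval, integral_finsetSum _ (fun i _ => hTint i), hG0] at hs
  simp only [add_sub_cancel_right] at hs
  rw [hs]
  congr 1
  · norm_num
  refine Finset.sum_congr rfl fun i _ => ?_
  simp only [hT]
  rw [integral_const_mul, Real.integral_rpow_mul_exp_neg_mul_Ioi (by positivity) (by positivity)]

/-- With `ξ = N_d·P_s/(λ(P_i + P_n))` and `γ = Lλ(P_n + P_i)/P_s`, the expectation of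
`Q(√(2tξ))` under the Gamma density `(L^L/(L−1)!) t^{L−1} e^{−Lt}` equals
`1/2 − (1/2)·Σ_{i=0}^{L−1} C(2i,i)·(γ/(4N_d))^i·(N_d/(N_d+γ))^{i+1/2}`. -/
theorem BER_stationary_interference
    (L : ℕ) (hL : 0 < L) (Ps Pn Pi Nd lam ξ γ : ℝ)
    (hPs : 0 < Ps) (hPn : 0 < Pn) (hPi : 0 < Pi) (hNd : 0 < Nd) (hlam : 0 < lam)
    (hξ : ξ = Nd * Ps / (lam * (Pi + Pn)))
    (hγ : γ = (L : ℝ) * lam * (Pn + Pi) / Ps) :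
    ∫ t in Set.Ioi (0 : ℝ),
        gaussQ (Real.sqrt (2 * t * ξ)) *
          ((L : ℝ) ^ L / (Nat.factorial (L - 1) : ℝ)) * t ^ (L - 1) *
          Real.exp (-(L : ℝ) * t)
      = 1 / 2 - 1 / 2 *
          ∑ i ∈ Finset.range L, (Nat.choose (2 * i) i : ℝ) * (γ / (4 * Nd)) ^ i *
            (Nd / (Nd + γ)) ^ ((i : ℝ) + 1 / 2) := by
  have hξ0 : 0 < ξ := by
    rw [hξ]
    positivity
  have ha : (0 : ℝ) < L := by exact_mod_cast hL
  have hγξ : γ = Nd * L / ξ := by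
    rw [hγ, hξ]
    field_simp
    ring
  have h := main_aux L ξ ha hξ0 (L - 1)
  rw [Nat.sub_add_cancel hL] at h
  rw [h, Finset.mul_sum]
  congr 1
  refine Finset.sum_congr rfl fun i _ => ?_
  generalize (L : ℝ) = a at *
  have e1 : γ / (4 * Nd) = a / (4 * ξ) := by
    rw [hγξ]
    field_simp
  have e2 : Nd / (Nd + γ) = ξ * (1 / (a + ξ)) := by
    rw [hγξ]
    field_simp
    ring
  rw [e1, e2, Real.mul_rpow hξ0.le (by positivity), Real.rpow_add hξ0, Real.rpow_natCast,
    ← Real.sqrt_eq_rpow, gamma_half, Real.sqrt_div hξ0.le, div_pow, mul_pow]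
  have a4 : 0 < √Real.pi := by positivity
  have a5 : (Nat.factorial i : ℝ) ≠ 0 := by positivity
  field_simp
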